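/- Let G = A *_C B be an amalgamated free product, fix a nontrivial a ∈ A with CaC ≠ Ca⁻¹C, and let Δ: G → ℝ be defined from a-segments in special forms as Δ(g) = Σ_{k≥1} r_k(g). If g ∈ G is a product of k group-palindromes, g = p₁p₂⋯p_k with k ≥ 1, then Δ(g) ≤ 12k − 9. -/

import Mathlib

/-!
The amalgam is studied through *patterns*: to an alternating expression `x₁ ⋯ xₙ` one assigns the
word over `{1, -1, 0}` recording which syllables lie in `C a C`, in `C a⁻¹ C`, or in neither. By
the normal form theorem (`isAmalg`, deduced from Mathlib's theorem for `Monoid.PushoutI`), the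
pattern depends only on the group element (`IsAmalg.pattern_unique`), so `Δ(g)` is bounded by the
size of the support of the vector `par w` over `ZMod 2`, where `w` is the pattern of `g` and
`par w n` is the parity of the number of `a`- and `a⁻¹`-segments of length `n` (`Delta_le`).

Concatenating two words with at most one letter between them changes the sum of their parity
vectors in at most three places (`par_insert`), and the parity vector is invariant under reversal
and inversion. Two consequences follow.

* The pattern of a group-palindrome is a palindrome `P x P.reverse` with `x` of length at most
  one, so its parity vector has at most `3` nonzero entries (`par_palindrome`).
* If `g` and `h` have patterns `P x T` and `T⁻¹ y Q`, where `T` cancels, then `g h` has pattern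
  `P z Q` with `x`, `y`, `z` of length at most one (`IsAmalg.pattern_mul`); hence the parity
  vector of `g h` is the sum of those of `g` and `h` up to `9` entries (`par_product`).

A product of `k` group-palindromes therefore has weight at most `3 k + 9 (k - 1) = 12 k - 9`.
-/

open Monoid

open scoped Classical

namespace PalAmalg

variable {A B C : Type*} [Group A] [Group B] [Group C]
variable (i : C →* A) (j : C →* B)

/-- The free product of `A` and `B` amalgamated over `C` (embedded in `A` via `i` and in `B`
via `j`): the quotient of the free product `A ∗ B` by the normal subgroup generated by the
elements `i c * (j c)⁻¹`, `c ∈ C`. -/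
abbrev Amalg : Type _ :=
  Coprod A B ⧸ Subgroup.normalClosure
    {x : Coprod A B | ∃ c : C, x = Coprod.inl (i c) * (Coprod.inr (j c))⁻¹}

/-- The canonical map of the factor `A` into the amalgam. -/
def ofA : A →* Amalg i j := (QuotientGroup.mk' _).comp Coprod.inl

/-- The canonical map of the factor `B` into the amalgam. -/
def ofB : B →* Amalg i j := (QuotientGroup.mk' _).comp Coprod.inr

/-- The image of the factor `A` in the amalgam. -/
def AG : Set (Amalg i j) := Set.range (ofA i j)

/-- The image of the factor `B` in the amalgam. -/
def BG : Set (Amalg i j) := Set.range (ofB i j)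

/-- The image of the amalgamated subgroup `C` in the amalgam. -/
def CG : Set (Amalg i j) := Set.range ((ofA i j).comp i)

/-- The double coset `C v C` in the amalgam. -/
def DCoset (v : Amalg i j) : Set (Amalg i j) :=
  {x | ∃ c1 ∈ CG i j, ∃ c2 ∈ CG i j, x = c1 * v * c2}

/-- A sequence `x₁, …, xₙ` of elements of the amalgam is reduced if every `xᵢ` lies in one of
the factors, successive `xᵢ, xᵢ₊₁` lie in different factors, no `xᵢ` lies in `C` when `n > 1`,
and `x₁ ≠ 1` when `n = 1`. -/
def Reduced (l : List (Amalg i j)) : Prop :=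
  (∀ x ∈ l, x ∈ AG i j ∪ BG i j) ∧
  List.Chain' (fun x y => ¬(x ∈ AG i j ∧ y ∈ AG i j) ∧ ¬(x ∈ BG i j ∧ y ∈ BG i j)) l ∧
  (1 < l.length → ∀ x ∈ l, x ∉ CG i j) ∧
  (l.length = 1 → ∀ x ∈ l, x ≠ 1)

/-- `g` is a group-palindrome if it has a reduced expression `x₁ ⋯ xₙ` whose reverse
`xₙ ⋯ x₁` represents the same element of the amalgam. -/
def GroupPalindrome (g : Amalg i j) : Prop :=
  ∃ l : List (Amalg i j), Reduced i j l ∧ l.prod = g ∧ l.reverse.prod = g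

/-- A special sequence (with respect to a fixed `a ∈ A`): an alternating sequence of elements
of the factors in which every syllable lying in the double coset `C a C` is the letter `a`
itself, and every syllable lying in `C a⁻¹ C` is the letter `a⁻¹` itself. -/
def IsSpecialSeq (a : A) (l : List (Amalg i j)) : Prop :=
  (∀ x ∈ l, x ∈ AG i j ∪ BG i j) ∧
  List.Chain' (fun x y => ¬(x ∈ AG i j ∧ y ∈ AG i j) ∧ ¬(x ∈ BG i j ∧ y ∈ BG i j)) l ∧
  (1 < l.length → ∀ x ∈ l, x ∉ CG i j) ∧
  (∀ x ∈ l, x ∈ DCoset i j (ofA i j a) → x = ofA i j a) ∧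
  (∀ x ∈ l, x ∈ DCoset i j (ofA i j a)⁻¹ → x = (ofA i j a)⁻¹)

/-- `l` is a special form of `g`: up to boundary elements `u, u'` of `C` (which arise when the
first or last syllable is replaced by `a^{±1}`), the special sequence `l` represents `g`. -/
def IsSpecialForm (a : A) (g : Amalg i j) (l : List (Amalg i j)) : Prop :=
  IsSpecialSeq i j a l ∧ ∃ u ∈ CG i j, ∃ u' ∈ CG i j, u * l.prod * u' = g

/-- A chosen special form of `g`. -/
noncomputable def spform (a : A) (g : Amalg i j) : List (Amalg i j) :=
  if h : ∃ l : List (Amalg i j), IsSpecialForm i j a g l then Classical.choose h else []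

/-- The number of `v`-segments of length `2k-1` in the list `l`: subwords
`v x₁ ⋯ x_{2k-1} v` with no `x_t = v`. -/
noncomputable def segCount (v : Amalg i j) (k : ℕ) (l : List (Amalg i j)) : ℕ :=
  ((Finset.range (l.length + 1)).filter fun s => ∃ l₁ m l₂ : List (Amalg i j),
    l = l₁ ++ [v] ++ m ++ [v] ++ l₂ ∧ l₁.length = s ∧ m.length = 2 * k - 1 ∧ v ∉ m).card

/-- `p_k(g)`: the number of `a`-segments of length `2k-1` in the special form of `g`. -/
noncomputable def pk (a : A) (k : ℕ) (g : Amalg i j) : ℕ :=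
  segCount i j (ofA i j a) k (spform i j a g)

/-- `m_k(g)`: the number of `a⁻¹`-segments of length `2k-1` in the special form of `g`. -/
noncomputable def mk (a : A) (k : ℕ) (g : Amalg i j) : ℕ :=
  segCount i j (ofA i j a)⁻¹ k (spform i j a g)

/-- `d_k = p_k - m_k`. -/
noncomputable def dk (a : A) (k : ℕ) (g : Amalg i j) : ℤ :=
  (pk i j a k g : ℤ) - (mk i j a k g : ℤ)

/-- `r_k ∈ {0,1}`: the remainder of `d_k` modulo 2. -/
noncomputable def rk (a : A) (k : ℕ) (g : Amalg i j) : ℤ := dk i j a k g % 2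

/-- The quasi-homomorphism `Δ(g) = Σ_{k ≥ 1} r_k(g)` (a finite sum, since `r_k = 0` for `k`
larger than the length of the special form). -/
noncomputable def Delta (a : A) (g : Amalg i j) : ℝ :=
  ∑ k ∈ Finset.Icc 1 (spform i j a g).length, (rk i j a k g : ℝ)

/-! ### Segments in words -/

section Combinatorics

variable {α β : Type*}

/-- The first occurrence of `v` in `w` is at position `n` (counted from `0`). -/
def FirstAt (v : α) (n : ℕ) (w : List α) : Prop := w[n]? = some v ∧ v ∉ w.take n

/-- The number of subwords `v m v` of `w` with `v ∉ m` and `m` of length `n`, computed by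
recursion on `w`. -/
noncomputable def seg (v : α) (n : ℕ) : List α → ℕ
  | [] => 0
  | x :: w => seg v n w + if x = v ∧ FirstAt v n w then 1 else 0

lemma FirstAt.mem {v : α} {n : ℕ} {w : List α} (h : FirstAt v n w) : v ∈ w :=
  List.mem_of_getElem? h.1

lemma FirstAt.unique {v : α} {n n' : ℕ} {w : List α} (h : FirstAt v n w)
    (h' : FirstAt v n' w) : n = n' := by
  have key : ∀ {n n' : ℕ}, FirstAt v n w → FirstAt v n' w → ¬ n < n' := by
    intro n n' h h' hlt
    apply h'.2
    have : (w.take n')[n]? = some v := by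
      rw [List.getElem?_take, if_pos hlt]; exact h.1
    exact List.mem_of_getElem? this
  have h1 := key h h'
  have h2 := key h' h
  omega

lemma firstAt_append_of_mem {v : α} {n : ℕ} {u w : List α} (hv : v ∈ u) :
    FirstAt v n (u ++ w) ↔ FirstAt v n u := by
  by_cases hn : n < u.length
  · simp only [FirstAt]
    rw [List.getElem?_append_left hn, List.take_append_of_le_length hn.le]
  · push Not at hn
    constructor
    · rintro ⟨_, h⟩
      exact absurd (by rw [List.take_append]; simp [List.take_of_length_le hn, hv]) h
    · rintro ⟨h, _⟩
      rw [List.getElem?_eq_none hn] at h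
      simp at h

lemma firstAt_concat_of_not_mem {v x : α} {n : ℕ} {u : List α} (hv : v ∉ u) :
    FirstAt v n (u ++ [x]) ↔ x = v ∧ n = u.length := by
  constructor
  · rintro ⟨h, -⟩
    rcases lt_trichotomy n u.length with hn | hn | hn
    · rw [List.getElem?_append_left hn] at h
      exact absurd (List.mem_of_getElem? h) hv
    · subst hn
      simp at h
      exact ⟨h, rfl⟩
    · rw [List.getElem?_eq_none (by simp; omega)] at h
      simp at h
  · rintro ⟨rfl, rfl⟩
    exact ⟨by simp, by simpa using hv⟩

lemma seg_append_of_not_mem {v : α} {n : ℕ} {u w : List α} (hv : v ∉ u) :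
    seg v n (u ++ w) = seg v n w := by
  induction u with
  | nil => rfl
  | cons x u ih =>
    simp only [List.mem_cons, not_or] at hv
    simp [seg, ih hv.2, Ne.symm hv.1]

lemma seg_of_not_mem {v : α} {n : ℕ} {u : List α} (hv : v ∉ u) : seg v n u = 0 := by
  have := seg_append_of_not_mem (n := n) (w := []) hv
  simpa [seg] using this

lemma seg_concat (v x : α) (n : ℕ) (w : List α) :
    seg v n (w ++ [x]) = seg v n w + if x = v ∧ FirstAt v n w.reverse then 1 else 0 := by
  induction w with
  | nil => simp [seg, FirstAt]
  | cons y w ih =>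
    simp only [List.cons_append, seg, ih, List.reverse_cons]
    by_cases hv : v ∈ w
    · rw [firstAt_append_of_mem hv, firstAt_append_of_mem (List.mem_reverse.2 hv)]
      omega
    · have h1 : ¬ FirstAt v n w := fun h => hv h.mem
      have h2 : ¬ FirstAt v n w.reverse := fun h => hv (List.mem_reverse.1 h.mem)
      rw [firstAt_concat_of_not_mem hv,
        firstAt_concat_of_not_mem (fun h => hv (List.mem_reverse.1 h))]
      simp only [h1, h2, and_false, if_false, List.length_reverse, add_zero]
      by_cases hx : x = v <;> by_cases hy : y = v <;> simp [hx, hy]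

lemma seg_reverse (v : α) (n : ℕ) (w : List α) : seg v n w.reverse = seg v n w := by
  induction w with
  | nil => rfl
  | cons x w ih => simp [seg_concat, seg, ih]

lemma seg_map (f : α → β) (v : α) (n : ℕ) (w : List α) (h : ∀ x ∈ w, x = v ↔ f x = f v) :
    seg (f v) n (w.map f) = seg v n w := by
  induction w with
  | nil => rfl
  | cons x w ih =>
    simp only [List.mem_cons, forall_eq_or_imp] at h
    have hF : FirstAt (f v) n (w.map f) ↔ FirstAt v n w := by
      simp only [FirstAt, ← List.map_take, List.getElem?_map, Option.map_eq_some_iff,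
        List.mem_map, not_exists, not_and]
      constructor
      · rintro ⟨⟨y, hy, hy'⟩, h2⟩
        rw [← h.2 y (List.mem_of_getElem? hy)] at hy'
        subst hy'
        exact ⟨hy, fun hm => h2 _ hm rfl⟩
      · rintro ⟨h1, h2⟩
        refine ⟨⟨v, h1, rfl⟩, fun y hy hy' => ?_⟩
        rw [← h.2 y (List.mem_of_mem_take hy)] at hy'
        exact h2 (hy' ▸ hy)
    simp only [List.map_cons, seg, ih h.2, hF, ← h.1]

/-- The set-theoretic count of segments agrees with the recursive one. -/
lemma card_segments (v : α) (n : ℕ) (l : List α) :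
    ((Finset.range (l.length + 1)).filter fun s => ∃ l₁ m l₂ : List α,
      l = l₁ ++ [v] ++ m ++ [v] ++ l₂ ∧ l₁.length = s ∧ m.length = n ∧ v ∉ m).card
      = seg v n l := by
  induction l with
  | nil => simp [seg]
  | cons x l ih =>
    rw [seg, ← ih, Finset.card_filter, Finset.card_filter, List.length_cons,
      Finset.sum_range_succ']
    congr 1
    · refine Finset.sum_congr rfl fun s _ => if_congr ?_ rfl rfl
      constructor
      · rintro ⟨l₁, m, l₂, h, hs, hm⟩
        cases l₁ with
        | nil => simp at hs
        | cons y l₁ =>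
          simp only [List.cons_append, List.cons.injEq] at h
          exact ⟨l₁, m, l₂, h.2, by simpa using hs, hm⟩
      · rintro ⟨l₁, m, l₂, h, hs, hm⟩
        exact ⟨x :: l₁, m, l₂, by simp [h], by simp [hs], hm⟩
    · refine if_congr ?_ rfl rfl
      constructor
      · rintro ⟨l₁, m, l₂, h, hs, hm, hv⟩
        obtain rfl := List.eq_nil_of_length_eq_zero hs
        simp only [List.nil_append, List.cons_append, List.append_assoc, List.cons.injEq] at h
        obtain ⟨rfl, rfl⟩ := h
        subst hm
        exact ⟨rfl, by simp, by simpa using hv⟩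
      · rintro ⟨rfl, h, hv⟩
        obtain ⟨hn, hx⟩ := List.getElem?_eq_some_iff.1 h
        refine ⟨[], l.take n, l.drop (n + 1), ?_, rfl, by simp; omega, hv⟩
        simp only [List.nil_append, List.cons_append, List.append_assoc, List.cons.injEq, true_and]
        conv_lhs => rw [← List.take_append_drop n l, List.drop_eq_getElem_cons hn, hx]

/-- `e` vanishes at all but at most `N` arguments. -/
def SuppLE (e : ℕ → ZMod 2) (N : ℕ) : Prop := ∃ s : Finset ℕ, s.card ≤ N ∧ ∀ n ∉ s, e n = 0

lemma SuppLE.add {e e' : ℕ → ZMod 2} {N N' : ℕ} (h : SuppLE e N) (h' : SuppLE e' N') :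
    SuppLE (fun n => e n + e' n) (N + N') := by
  obtain ⟨s, hs, h⟩ := h
  obtain ⟨s', hs', h'⟩ := h'
  refine ⟨s ∪ s', (Finset.card_union_le _ _).trans (by omega), fun n hn => ?_⟩
  simp only [Finset.mem_union, not_or] at hn
  simp [h n hn.1, h' n hn.2]

lemma SuppLE.mono {e : ℕ → ZMod 2} {N N' : ℕ} (h : SuppLE e N) (hN : N ≤ N') : SuppLE e N' := by
  obtain ⟨s, hs, h⟩ := h
  exact ⟨s, hs.trans hN, h⟩

lemma SuppLE.congr {e e' : ℕ → ZMod 2} {N : ℕ} (h : SuppLE e N) (he : ∀ n, e' n = e n) :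
    SuppLE e' N := by
  obtain rfl : e' = e := funext he
  exact h

/-- At most one segment straddles the boundary between two concatenated words. -/
lemma seg_append (v : α) (u w : List α) :
    SuppLE (fun n => (seg v n (u ++ w) : ZMod 2) + seg v n u + seg v n w) 1 := by
  have h2 : ∀ x : ZMod 2, x + x = 0 := CharTwo.add_self_eq_zero
  induction u with
  | nil => exact ⟨∅, by simp, fun n _ => by simp [seg, h2]⟩
  | cons x u ih =>
    by_cases hv : v ∈ u
    · refine ih.congr fun n => ?_
      simp only [List.cons_append, seg, firstAt_append_of_mem hv, Nat.cast_add]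
      linear_combination h2 ((if x = v ∧ FirstAt v n u then 1 else 0 : ℕ) : ZMod 2)
    · have h1 : ∀ n, ¬ FirstAt v n u := fun n h => hv h.mem
      have hsimp : ∀ n, (seg v n (x :: u ++ w) : ZMod 2) + seg v n (x :: u) + seg v n w
          = (if x = v ∧ FirstAt v n (u ++ w) then 1 else 0 : ℕ) := by
        intro n
        simp only [List.cons_append, seg, seg_append_of_not_mem hv, seg_of_not_mem hv, h1,
          and_false, if_false, Nat.cast_add, Nat.cast_zero]
        linear_combination h2 (seg v n w : ZMod 2)
      by_cases hex : ∃ n, FirstAt v n (u ++ w)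
      · obtain ⟨m, hm⟩ := hex
        refine ⟨{m}, by simp, fun n hn => ?_⟩
        refine (hsimp n).trans ?_
        rw [if_neg, Nat.cast_zero]
        rintro ⟨-, h⟩
        exact hn (by simp [h.unique hm])
      · refine ⟨∅, by simp, fun n _ => ?_⟩
        refine (hsimp n).trans ?_
        rw [if_neg, Nat.cast_zero]
        exact fun h => hex ⟨n, h.2⟩

/-- Joining two words by a letter `b` creates at most two `v`-segments if `v = b`, and at most one
otherwise. -/
lemma seg_insert (v b : α) (u w : List α) :
    SuppLE (fun n => (seg v n (u ++ [b] ++ w) : ZMod 2) + seg v n u + seg v n w)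
      (if b = v then 2 else 1) := by
  have h2 : ∀ x : ZMod 2, x + x = 0 := CharTwo.add_self_eq_zero
  have h1 := seg_append v u ([b] ++ w)
  split_ifs with hb
  · refine (h1.add (seg_append v [b] w)).congr fun n => ?_
    have : seg v n [b] = 0 := by simp [seg, FirstAt]
    rw [this, List.append_assoc]
    push_cast
    linear_combination - h2 (seg v n ([b] ++ w) : ZMod 2)
  · refine h1.congr fun n => ?_
    have : seg v n ([b] ++ w) = seg v n w :=
      seg_append_of_not_mem (by simpa using fun h => hb h.symm)
    rw [List.append_assoc, this]

/-- The parity of the number of `a`- and `a⁻¹`-segments of length `n` in a pattern: the letters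
`1`, `-1` stand for `a`, `a⁻¹`, and `0` for any other syllable. -/
noncomputable def par (w : List SignType) (n : ℕ) : ZMod 2 := seg 1 n w + seg (-1) n w

/-- The pattern of the inverse element. -/
def invPat (w : List SignType) : List SignType := (w.map (- ·)).reverse

lemma par_reverse (w : List SignType) (n : ℕ) : par w.reverse n = par w n := by
  simp [par, seg_reverse]

lemma par_invPat (w : List SignType) (n : ℕ) : par (invPat w) n = par w n := by
  have h : ∀ v, seg (-v) n (w.map (- ·)) = seg v n w := fun v =>
    seg_map (- ·) v n w (fun x _ => neg_inj.symm)
  have h1 := h 1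
  have h2 := h (-1)
  rw [neg_neg] at h2
  rw [invPat, par_reverse, par, par, h1, h2, add_comm]

/-- Joining two patterns, with at most one letter in between, changes the parity vector in at
most three places. -/
lemma par_insert (P x Q : List SignType) (hx : x.length ≤ 1) :
    SuppLE (fun n => par (P ++ x ++ Q) n + par P n + par Q n) 3 := by
  rcases x with _ | ⟨b, _ | ⟨c, x⟩⟩
  · refine (((seg_append 1 P Q).add (seg_append (-1) P Q)).mono (by norm_num)).congr fun n => ?_
    simp only [par, List.append_nil]
    ring
  · have hb : (if b = 1 then 2 else 1) + (if b = -1 then 2 else 1) ≤ 3 := by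
      by_cases h : b = 1
      · subst h; simp
      · rw [if_neg h]; split_ifs <;> simp
    refine (((seg_insert 1 b P Q).add (seg_insert (-1) b P Q)).mono (by convert hb)).congr fun n => ?_
    simp only [par]
    ring
  · simp at hx

lemma par_palindrome (w : List SignType) (hw : w.reverse = w) : SuppLE (par w) 3 := by
  obtain ⟨P, x, hx, rfl⟩ : ∃ P x : List SignType, x.length ≤ 1 ∧ w = P ++ x ++ P.reverse := by
    induction List.Palindrome.of_reverse_eq hw with
    | nil => exact ⟨[], [], by simp, rfl⟩
    | singleton x => exact ⟨[], [x], by simp, rfl⟩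
    | cons_concat x h ih =>
      obtain ⟨P, y, hy, h⟩ := ih h.reverse_eq
      exact ⟨x :: P, y, hy, by simp [h]⟩
  refine (par_insert P x P.reverse hx).congr fun n => ?_
  rw [par_reverse, add_assoc, CharTwo.add_self_eq_zero, add_zero]

/-- The parity vector is additive up to nine places along a product with cancellation. -/
lemma par_product {w w' w'' P x T y z Q : List SignType} (hx : x.length ≤ 1) (hy : y.length ≤ 1)
    (hz : z.length ≤ 1) (h : w = P ++ x ++ T) (h' : w' = invPat T ++ y ++ Q)
    (h'' : w'' = P ++ z ++ Q) {N N' : ℕ} (hN : SuppLE (par w) N) (hN' : SuppLE (par w') N') :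
    SuppLE (par w'') (N + N' + 9) := by
  subst h h' h''
  have h2 : ∀ x : ZMod 2, x + x = 0 := CharTwo.add_self_eq_zero
  have e1 := par_insert P x T hx
  have e2 := par_insert (invPat T) y Q hy
  have e3 := par_insert P z Q hz
  refine ((((hN.add hN').add e1).add e2).add e3).mono (by omega) |>.congr fun n => ?_
  simp only [par_invPat]
  linear_combination - h2 (par (P ++ x ++ T) n) - h2 (par (invPat T ++ y ++ Q) n)
    - h2 (par P n) - h2 (par T n) - h2 (par Q n)

end Combinatorics

/-! ### Alternating products of two subgroups -/

section Alternating

variable {G : Type*} [Group G]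

/-- An alternating list: every entry lies in `H ∪ K` but not in `C`, and of two successive
entries exactly one lies in `H`. -/
def Alt (H K C : Subgroup G) (l : List G) : Prop :=
  (∀ x ∈ l, (x ∈ H ∨ x ∈ K) ∧ x ∉ C) ∧ l.IsChain (fun x y => x ∈ H ↔ y ∉ H)

/-- The internal characterization of the amalgam of `H` and `K` over `C = H ∩ K`: no nonempty
alternating product lies in `C`. -/
structure IsAmalg (H K C : Subgroup G) : Prop where
  le_left : C ≤ H
  le_right : C ≤ K
  inf_le : ∀ x, x ∈ H → x ∈ K → x ∈ C
  prod_not_mem : ∀ l, Alt H K C l → l ≠ [] → l.prod ∉ C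

/-- A letter type for syllables: a function constant on double cosets of `C` that changes sign
under inversion. -/
structure IsLetter (C : Subgroup G) (cls : G → SignType) : Prop where
  mul_left : ∀ c ∈ C, ∀ x, cls (c * x) = cls x
  mul_right : ∀ c ∈ C, ∀ x, cls (x * c) = cls x
  inv : ∀ x, cls x⁻¹ = - cls x

variable {H K C : Subgroup G} {cls : G → SignType}

lemma alt_nil : Alt H K C [] := by simp [Alt]

lemma alt_cons {x : G} {l : List G} : Alt H K C (x :: l) ↔
    ((x ∈ H ∨ x ∈ K) ∧ x ∉ C) ∧ (∀ y ∈ l.head?, (x ∈ H ↔ y ∉ H)) ∧ Alt H K C l := by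
  simp only [Alt, List.mem_cons, forall_eq_or_imp, List.isChain_cons]
  tauto

lemma alt_append {l l' : List G} : Alt H K C (l ++ l') ↔
    Alt H K C l ∧ Alt H K C l' ∧
      ∀ x ∈ l.getLast?, ∀ y ∈ l'.head?, (x ∈ H ↔ y ∉ H) := by
  simp only [Alt, List.mem_append, or_imp, forall_and, List.isChain_append]
  tauto

lemma alt_reverse {l : List G} (h : Alt H K C l) : Alt H K C l.reverse := by
  refine ⟨fun x hx => h.1 x (List.mem_reverse.1 hx), ?_⟩
  rw [List.isChain_reverse]
  exact h.2.imp fun x y hxy => by tauto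

lemma alt_map_inv {l : List G} (h : Alt H K C l) : Alt H K C (l.map (·⁻¹)) := by
  refine ⟨fun x hx => ?_, ?_⟩
  · obtain ⟨y, hy, rfl⟩ := List.mem_map.1 hx
    simpa using h.1 y hy
  · rw [List.isChain_map]
    exact h.2.imp fun x y hxy => by simpa using hxy

/-- A syllable may be replaced by another one of the same factor. -/
lemma alt_replace {l l' : List G} {x x' : G} (h : Alt H K C (l ++ x :: l'))
    (hx : (x' ∈ H ∨ x' ∈ K) ∧ x' ∉ C) (hxx : x' ∈ H ↔ x ∈ H) : Alt H K C (l ++ x' :: l') := by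
  rw [alt_append, alt_cons] at h ⊢
  refine ⟨h.1, ⟨hx, ?_, h.2.1.2.2⟩, ?_⟩
  · rw [hxx]; exact h.2.1.2.1
  · intro y hy z hz
    simp only [List.head?_cons, Option.mem_def, Option.some.injEq] at hz
    subst hz
    rw [hxx]
    exact h.2.2 y hy x (by simp)

namespace IsAmalg

/-- A `C`-translate of a syllable is a syllable of the same factor. -/
lemma syl_mul (D : IsAmalg H K C) {c c' x : G} (hc : c ∈ C) (hc' : c' ∈ C)
    (hx : (x ∈ H ∨ x ∈ K) ∧ x ∉ C) :
    ((c * x * c' ∈ H ∨ c * x * c' ∈ K) ∧ c * x * c' ∉ C) ∧ (c * x * c' ∈ H ↔ x ∈ H) := by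
  rw [H.mul_mem_cancel_right (D.le_left hc'), H.mul_mem_cancel_left (D.le_left hc),
    K.mul_mem_cancel_right (D.le_right hc'), K.mul_mem_cancel_left (D.le_right hc),
    C.mul_mem_cancel_right hc', C.mul_mem_cancel_left hc]
  exact ⟨hx, Iff.rfl⟩

/-- The product of two syllables of the same factor is a syllable of that factor unless it
falls into `C`. -/
lemma syl_merge (D : IsAmalg H K C) {x c y : G} (hx : (x ∈ H ∨ x ∈ K) ∧ x ∉ C) (hc : c ∈ C)
    (hy : (y ∈ H ∨ y ∈ K) ∧ y ∉ C) (hxy : x ∈ H ↔ y ∈ H) (hz : x * c * y ∉ C) :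
    ((x * c * y ∈ H ∨ x * c * y ∈ K) ∧ x * c * y ∉ C) ∧ (x * c * y ∈ H ↔ x ∈ H) := by
  by_cases h : x ∈ H
  · have : x * c * y ∈ H := H.mul_mem (H.mul_mem h (D.le_left hc)) (hxy.1 h)
    tauto
  · have hxK : x ∈ K := by tauto
    have hyK : y ∈ K := by tauto
    have hK : x * c * y ∈ K := K.mul_mem (K.mul_mem hxK (D.le_right hc)) hyK
    have hH : x * c * y ∉ H := fun hH => hz (D.inf_le _ hH hK)
    tauto

/-- Two alternating expressions of the same element, up to multiplication by `C` on both sides,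
have the same letter pattern. -/
lemma pattern_unique (D : IsAmalg H K C) (L : IsLetter C cls) :
    ∀ (l l' : List G) (u c : G), u ∈ C → c ∈ C → Alt H K C l → Alt H K C l' →
    u * l.prod * c = l'.prod → l.map cls = l'.map cls := by
  intro l
  induction l with
  | nil =>
    intro l' u c hu hc _ hl' h
    by_contra hne
    have hne' : l' ≠ [] := by rintro rfl; exact hne rfl
    apply D.prod_not_mem l' hl' hne'
    rw [← h]
    simpa using C.mul_mem hu hc
  | cons x l ih =>
    intro l' u c hu hc hl hl' h
    cases l' with
    | nil =>
      exfalso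
      apply D.prod_not_mem _ hl (by simp)
      have : (x :: l).prod = u⁻¹ * c⁻¹ := by
        rw [List.prod_nil] at h
        rw [← mul_inv_rev, eq_inv_iff_mul_eq_one]
        have := congrArg (fun t => u⁻¹ * t * u) h
        simpa [mul_assoc] using this
      rw [this]
      exact C.mul_mem (C.inv_mem hu) (C.inv_mem hc)
    | cons y t =>
      simp only [List.prod_cons] at h
      obtain ⟨hx, hxl, hl0⟩ := alt_cons.1 hl
      obtain ⟨hy, hyt, ht⟩ := alt_cons.1 hl'
      have hR : Alt H K C ((t.map (·⁻¹)).reverse ++ [y⁻¹]) := by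
        have := alt_reverse (alt_map_inv hl')
        simpa using this
      have hyi : (y⁻¹ ∈ H ∨ y⁻¹ ∈ K) ∧ y⁻¹ ∉ C := by simpa using hy
      have hprod : (t.map (·⁻¹)).reverse.prod * (y⁻¹ * u * x) * l.prod = c⁻¹ := by
        rw [← List.prod_inv_reverse, eq_inv_iff_mul_eq_one]
        have h' : u * (x * (l.prod * c)) = y * t.prod := by simpa [mul_assoc] using h
        simp [mul_assoc, h']
      by_cases hxy : x ∈ H ↔ y ∈ H
      · by_cases hz : y⁻¹ * u * x ∈ C
        · have h1 := ih t (y⁻¹ * u * x) c hz hc hl0 ht (by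
            have := congrArg (fun s => y⁻¹ * s) h
            simpa [mul_assoc] using this)
          have hxc : cls x = cls y := by
            have : x = u⁻¹ * (y * (y⁻¹ * u * x)) := by group
            rw [this, L.mul_left _ (C.inv_mem hu), L.mul_right _ hz]
          simp [h1, hxc]
        · exfalso
          have hzz := D.syl_merge hyi hu hx (by simpa using hxy.symm) hz
          have hA : Alt H K C ((t.map (·⁻¹)).reverse ++ (y⁻¹ * u * x) :: l) := by
            rw [alt_append] at hR
            refine alt_append.2 ⟨hR.1, alt_cons.2 ⟨hzz.1, ?_, hl0⟩, ?_⟩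
            · rw [hzz.2, H.inv_mem_iff, ← hxy]
              exact hxl
            · intro p hp q hq
              simp only [List.head?_cons, Option.mem_def, Option.some.injEq] at hq
              subst hq
              rw [hzz.2]
              exact hR.2.2 p hp _ (by simp)
          apply D.prod_not_mem _ hA (by simp)
          rw [List.prod_append, List.prod_cons, ← mul_assoc, hprod]
          exact C.inv_mem hc
      · exfalso
        have hux := D.syl_mul hu C.one_mem hx
        simp only [mul_one] at hux
        have hA : Alt H K C (((t.map (·⁻¹)).reverse ++ [y⁻¹]) ++ (u * x) :: l) := by
          refine alt_append.2 ⟨hR, alt_cons.2 ⟨hux.1, ?_, hl0⟩, ?_⟩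
          · rw [hux.2]; exact hxl
          · intro p hp q hq
            simp only [List.head?_cons, Option.mem_def, Option.some.injEq] at hq
            simp only [List.getLast?_append, List.getLast?_singleton, Option.some_or,
              Option.mem_def, Option.some.injEq] at hp
            subst hp hq
            rw [hux.2, H.inv_mem_iff]
            tauto
        apply D.prod_not_mem _ hA (by simp)
        have : (t.map (·⁻¹)).reverse.prod * y⁻¹ * (u * x * l.prod) = c⁻¹ := by
          rw [← hprod]; group
        rw [List.prod_append, List.prod_cons, List.prod_append, List.prod_singleton, this]
        exact C.inv_mem hc

/-- Multiplication of two alternating expressions: a suffix `T` of the first word cancels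
against its inverse in the second, after which at most one pair of syllables merges. -/
lemma pattern_mul (D : IsAmalg H K C) (L : IsLetter C cls) : ∀ (l l' : List G) (c : G), c ∈ C →
    Alt H K C l → Alt H K C l' →
    ∃ (l'' : List G) (c' : G) (P x T y z Q : List SignType), Alt H K C l'' ∧ c' ∈ C ∧
      l.prod * c * l'.prod = l''.prod * c' ∧
      x.length ≤ 1 ∧ y.length ≤ 1 ∧ z.length ≤ 1 ∧
      l.map cls = P ++ x ++ T ∧ l'.map cls = invPat T ++ y ++ Q ∧ l''.map cls = P ++ z ++ Q := by
  intro l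
  induction l using List.reverseRecOn with
  | nil =>
    intro l' c hc _ hl'
    cases l' with
    | nil => exact ⟨[], c, [], [], [], [], [], [], alt_nil, hc, by simp, by simp [invPat]⟩
    | cons y t =>
      have hy := D.syl_mul hc C.one_mem (alt_cons.1 hl').1
      simp only [mul_one] at hy
      refine ⟨(c * y) :: t, 1, [], [], [], [], [], (y :: t).map cls,
        alt_replace (l := []) hl' hy.1 hy.2, C.one_mem, by simp [mul_assoc], by simp, by simp,
        by simp, by simp, by simp [invPat], ?_⟩
      simp [L.mul_left c hc]
  | append_singleton l x ih =>
    intro l' c hc hl hl'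
    cases l' with
    | nil =>
      exact ⟨l ++ [x], c, (l ++ [x]).map cls, [], [], [], [], [], hl, hc, by simp, by simp,
        by simp, by simp, by simp, by simp [invPat], by simp⟩
    | cons y t =>
      have hl0 := (alt_append.1 hl).1
      have hx := (alt_cons.1 (alt_append.1 hl).2.1).1
      have hlast := (alt_append.1 hl).2.2
      obtain ⟨hy, hyt, ht⟩ := alt_cons.1 hl'
      by_cases hxy : x ∈ H ↔ y ∈ H
      · by_cases hz : x * c * y ∈ C
        · obtain ⟨l'', c', P, p, T, q, r, Q, h1, h2, h3, hp, hq, hr, h4, h5, h6⟩ :=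
            ih t (x * c * y) hz hl0 ht
          have hyx : cls y = - cls x := by
            have : y = c⁻¹ * (x⁻¹ * (x * c * y)) := by group
            rw [this, L.mul_left _ (C.inv_mem hc), L.mul_right _ hz, L.inv]
          refine ⟨l'', c', P, p, T ++ [cls x], q, r, Q, h1, h2, ?_, hp, hq, hr, ?_, ?_, h6⟩
          · rw [← h3]; simp [mul_assoc]
          · simp [h4]
          · simp [h5, invPat, hyx]
        · have hzz := D.syl_merge hx hc hy hxy hz
          refine ⟨l ++ (x * c * y) :: t, 1, l.map cls, [cls x], [], [cls y], [cls (x * c * y)],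
            t.map cls, ?_, C.one_mem, by simp [mul_assoc], by simp, by simp, by simp, by simp,
            by simp [invPat], by simp⟩
          refine alt_append.2 ⟨hl0, alt_cons.2 ⟨hzz.1, ?_, ht⟩, ?_⟩
          · rw [hzz.2, hxy]; exact hyt
          · intro p hp q hq
            simp only [List.head?_cons, Option.mem_def, Option.some.injEq] at hq
            subst hq
            rw [hzz.2]
            exact hlast p hp _ (by simp)
      · have hcy := D.syl_mul hc C.one_mem hy
        simp only [mul_one] at hcy
        refine ⟨(l ++ [x]) ++ (c * y) :: t, 1, (l ++ [x]).map cls, [], [], [], [],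
          (y :: t).map cls, ?_, C.one_mem, by simp [mul_assoc], by simp, by simp, by simp,
          by simp, by simp [invPat], ?_⟩
        · refine alt_append.2 ⟨hl, alt_cons.2 ⟨hcy.1, ?_, ht⟩, ?_⟩
          · rw [hcy.2]; exact hyt
          · intro p hp q hq
            simp only [List.head?_cons, Option.mem_def, Option.some.injEq] at hq
            simp only [List.getLast?_append, List.getLast?_singleton, Option.some_or,
              Option.mem_def, Option.some.injEq] at hp
            subst hp hq
            rw [hcy.2]
            tauto
        · simp [L.mul_left c hc]

end IsAmalg

/-- `w` is the letter pattern of an alternating expression of `g` (up to a factor from `C`). -/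
def HasPat (H K C : Subgroup G) (cls : G → SignType) (g : G) (w : List SignType) : Prop :=
  ∃ l, Alt H K C l ∧ (∃ c ∈ C, g = l.prod * c) ∧ l.map cls = w

lemma HasPat.mul (D : IsAmalg H K C) (L : IsLetter C cls) {g h : G} {w w' : List SignType}
    {N N' : ℕ} (hg : HasPat H K C cls g w) (hh : HasPat H K C cls h w')
    (hN : SuppLE (par w) N) (hN' : SuppLE (par w') N') :
    ∃ w'', HasPat H K C cls (g * h) w'' ∧ SuppLE (par w'') (N + N' + 9) := by
  obtain ⟨l, hl, ⟨c, hc, rfl⟩, rfl⟩ := hg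
  obtain ⟨l', hl', ⟨c', hc', rfl⟩, rfl⟩ := hh
  obtain ⟨l'', d, P, x, T, y, z, Q, h1, h2, h3, hx, hy, hz, h4, h5, h6⟩ :=
    D.pattern_mul L l l' c hc hl hl'
  refine ⟨_, ⟨l'', h1, ⟨d * c', C.mul_mem h2 hc', ?_⟩, rfl⟩,
    par_product hx hy hz h4 h5 h6 hN hN'⟩
  rw [← mul_assoc, h3, mul_assoc]

/-- `m + 1` elements of parity weight at most `3` have a product of weight at most `12 m + 3`. -/
lemma hasPat_prod (D : IsAmalg H K C) (L : IsLetter C cls) (ps : List G) : ∀ p : G,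
    (∀ q ∈ p :: ps, ∃ w, HasPat H K C cls q w ∧ SuppLE (par w) 3) →
    ∃ w, HasPat H K C cls (p :: ps).prod w ∧ SuppLE (par w) (12 * ps.length + 3) := by
  induction ps with
  | nil => intro p h; simpa using h p
  | cons q ps ih =>
    intro p h
    obtain ⟨w, hw, hN⟩ := h p (by simp)
    obtain ⟨w', hw', hN'⟩ := ih q fun r hr => h r (List.mem_cons_of_mem _ hr)
    obtain ⟨w'', h1, h2⟩ := hw.mul D L hw' hN hN'
    refine ⟨w'', by simpa using h1, h2.mono ?_⟩
    simp only [List.length_cons]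
    omega

end Alternating

/-! ### The normal form theorem in the amalgam -/

section Concrete

universe uA uB

/-- The two factors as a family over `Bool`, lifted to a common universe. -/
def Fam (A : Type uA) (B : Type uB) : Bool → Type (max uA uB)
  | true => ULift.{uB} A
  | false => ULift.{uA} B

instance famGroup (A : Type uA) (B : Type uB) [Group A] [Group B] : ∀ b, Group (Fam A B b)
  | true => inferInstanceAs (Group (ULift.{uB} A))
  | false => inferInstanceAs (Group (ULift.{uA} B))

variable {A : Type uA} {B : Type uB} {C : Type*} [Group A] [Group B] [Group C]
variable {i : C →* A} {j : C →* B}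

/-- The inclusion of `A` into the family. -/
def upA : A →* Fam A B true := (MulEquiv.ulift : ULift.{uB} A ≃* A).symm.toMonoidHom

/-- The inclusion of `B` into the family. -/
def upB : B →* Fam A B false := (MulEquiv.ulift : ULift.{uA} B ≃* B).symm.toMonoidHom

lemma upA_injective : Function.Injective (upA : A →* Fam A B true) :=
  (MulEquiv.ulift : ULift.{uB} A ≃* A).symm.injective

lemma upB_injective : Function.Injective (upB : B →* Fam A B false) :=
  (MulEquiv.ulift : ULift.{uA} B ≃* B).symm.injective

/-- The embeddings of `C` into the members of the family. -/
def famMap (i : C →* A) (j : C →* B) : ∀ b, C →* Fam A B b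
  | true => upA.comp i
  | false => upB.comp j

lemma famMap_injective (hi : Function.Injective i) (hj : Function.Injective j) :
    ∀ b, Function.Injective (famMap i j b)
  | true => upA_injective.comp hi
  | false => upB_injective.comp hj

/-- The comparison homomorphism from the amalgam to Mathlib's pushout. -/
noncomputable def toPushout (i : C →* A) (j : C →* B) : Amalg i j →* PushoutI (famMap i j) :=
  QuotientGroup.lift _
    (Coprod.lift ((PushoutI.of (φ := famMap i j) true).comp upA)
      ((PushoutI.of (φ := famMap i j) false).comp upB)) (by
    intro x hx
    revert x
    change Subgroup.normalClosure _ ≤ _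
    apply Subgroup.normalClosure_le_normal
    rintro _ ⟨c, rfl⟩
    have h1 : PushoutI.of (φ := famMap i j) true (upA (i c)) = PushoutI.base _ c :=
      PushoutI.of_apply_eq_base (famMap i j) true c
    have h2 : PushoutI.of (φ := famMap i j) false (upB (j c)) = PushoutI.base _ c :=
      PushoutI.of_apply_eq_base (famMap i j) false c
    simp [MonoidHom.mem_ker, h1, h2])

lemma toPushout_ofA (x : A) : toPushout i j (ofA i j x) = PushoutI.of true (upA x) := by
  simp [toPushout, ofA]

lemma toPushout_ofB (x : B) : toPushout i j (ofB i j x) = PushoutI.of false (upB x) := by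
  simp [toPushout, ofB]

lemma ofA_eq_ofB (c : C) : ofA i j (i c) = ofB i j (j c) := by
  simp only [ofA, ofB, MonoidHom.comp_apply, QuotientGroup.mk'_apply]
  rw [← mul_inv_eq_one, ← QuotientGroup.mk_inv, ← QuotientGroup.mk_mul, QuotientGroup.eq_one_iff]
  exact Subgroup.subset_normalClosure ⟨c, rfl⟩

lemma ofB_mem_CG (c : C) : ofB i j (j c) ∈ CG i j := ⟨c, ofA_eq_ofB c⟩

/-- An alternating list in the amalgam lifts to a reduced word over the family. -/
lemma exists_word (l : List (Amalg i j))
    (hl : Alt (ofA i j).range (ofB i j).range ((ofA i j).comp i).range l) :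
    ∃ w : List (Σ b, Fam A B b), (∀ g ∈ w, g.2 ∉ (famMap i j g.1).range) ∧
      w.IsChain (fun g g' => g.1 ≠ g'.1) ∧
      (w.map fun g => PushoutI.of (φ := famMap i j) g.1 g.2).prod = toPushout i j l.prod ∧
      w.length = l.length ∧
      ∀ x ∈ l.head?, ∀ g ∈ w.head?, (g.1 = true ↔ x ∈ (ofA i j).range) := by
  induction l with
  | nil => exact ⟨[], by simp⟩
  | cons x l ih =>
    obtain ⟨hx, hxl, hl⟩ := alt_cons.1 hl
    obtain ⟨w, h1, h2, h3, h4, h5⟩ := ih hl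
    -- The tag of the new letter is forced by membership of `x` in the image of `A`.
    obtain ⟨g, hg1, hg2, hg3⟩ : ∃ g : Σ b, Fam A B b, g.2 ∉ (famMap i j g.1).range ∧
        PushoutI.of (φ := famMap i j) g.1 g.2 = toPushout i j x ∧
        (g.1 = true ↔ x ∈ (ofA i j).range) := by
      by_cases hA : x ∈ (ofA i j).range
      · obtain ⟨y, rfl⟩ := hA
        refine ⟨⟨true, upA y⟩, ?_, (toPushout_ofA y).symm, by simp⟩
        rintro ⟨c, hc⟩
        exact hx.2 ⟨c, congrArg (ofA i j) (upA_injective hc)⟩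
      · obtain ⟨y, rfl⟩ := hx.1.resolve_left hA
        refine ⟨⟨false, upB y⟩, ?_, (toPushout_ofB y).symm, by simpa using hA⟩
        rintro ⟨c, hc⟩
        exact hx.2 ⟨c, (ofA_eq_ofB c).trans (congrArg (ofB i j) (upB_injective hc))⟩
    refine ⟨g :: w, ?_, ?_, by simp [hg2, h3], by simp [h4], ?_⟩
    · simp only [List.mem_cons, forall_eq_or_imp]
      exact ⟨hg1, h1⟩
    · refine List.isChain_cons.2 ⟨fun g' hg' heq => ?_, h2⟩
      cases l with
      | nil =>
        obtain rfl := List.eq_nil_of_length_eq_zero h4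
        simp at hg'
      | cons y t =>
        have e1 := h5 y (by simp) g' hg'
        have e2 := hxl y (by simp)
        rw [heq] at hg3
        tauto
    · intro x' hx' g' hg'
      simp only [List.head?_cons, Option.mem_def, Option.some.injEq] at hx' hg'
      subst hx' hg'
      exact hg3

/-- The normal form theorem: the images of the factors form an amalgam in the internal sense. -/
lemma isAmalg (hi : Function.Injective i) (hj : Function.Injective j) :
    IsAmalg (ofA i j).range (ofB i j).range ((ofA i j).comp i).range where
  le_left := by
    rintro _ ⟨c, rfl⟩
    exact ⟨i c, rfl⟩
  le_right := by
    rintro _ ⟨c, rfl⟩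
    exact ⟨j c, (ofA_eq_ofB c).symm⟩
  inf_le := by
    rintro _ ⟨x, rfl⟩ ⟨y, hy⟩
    have hm : PushoutI.of (φ := famMap i j) true (upA x) ∈ (PushoutI.base (famMap i j)).range := by
      rw [← PushoutI.inf_of_range_eq_base_range (famMap_injective hi hj)
        (show true ≠ false by simp)]
      refine ⟨⟨_, rfl⟩, ⟨upB y, ?_⟩⟩
      rw [← toPushout_ofB, hy, toPushout_ofA]
    obtain ⟨c, hc⟩ := hm
    rw [← PushoutI.of_apply_eq_base (famMap i j) true c] at hc
    have := PushoutI.of_injective (famMap_injective hi hj) true hc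
    exact ⟨c, congrArg (ofA i j) (upA_injective this)⟩
  prod_not_mem := by
    rintro l hl hne ⟨c, hc⟩
    obtain ⟨w, h1, h2, h3, h4, -⟩ := exists_word l hl
    let W : CoprodI.Word (Fam A B) := ⟨w, fun g hg h => h1 g hg ⟨1, by rw [h, map_one]⟩, h2⟩
    have hW : PushoutI.Reduced (famMap i j) W := h1
    have hp : PushoutI.ofCoprodI W.prod = toPushout i j l.prod := by
      rw [← h3, CoprodI.Word.prod, map_list_prod, List.map_map]
      congr 1
    have := hW.eq_empty_of_mem_range (famMap_injective hi hj) (by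
      rw [hp, ← hc]
      refine ⟨c, ?_⟩
      rw [MonoidHom.comp_apply, toPushout_ofA]
      exact (PushoutI.of_apply_eq_base (famMap i j) true c).symm)
    have hw : w = [] := congrArg CoprodI.Word.toList this
    rw [hw] at h4
    exact hne (List.eq_nil_of_length_eq_zero h4.symm)

/-! ### Letters and special forms -/

/-- The letter of a syllable: `1` on `C v C`, `-1` on `C v⁻¹ C`, and `0` elsewhere. -/
noncomputable def letter (v x : Amalg i j) : SignType :=
  if x ∈ DCoset i j v then 1 else if x ∈ DCoset i j v⁻¹ then -1 else 0

lemma mem_DCoset_mul_left {v c x : Amalg i j} (hc : c ∈ ((ofA i j).comp i).range) :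
    c * x ∈ DCoset i j v ↔ x ∈ DCoset i j v := by
  constructor
  · rintro ⟨c1, h1, c2, h2, h⟩
    refine ⟨c⁻¹ * c1, Subgroup.mul_mem _ (Subgroup.inv_mem _ hc) h1, c2, h2, ?_⟩
    rw [← inv_mul_cancel_left c x, h]
    group
  · rintro ⟨c1, h1, c2, h2, rfl⟩
    exact ⟨c * c1, Subgroup.mul_mem _ hc h1, c2, h2, by group⟩

lemma inv_mem_DCoset {v x : Amalg i j} (h : x ∈ DCoset i j v) : x⁻¹ ∈ DCoset i j v⁻¹ := by
  obtain ⟨c1, h1, c2, h2, rfl⟩ := h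
  exact ⟨c2⁻¹, Subgroup.inv_mem ((ofA i j).comp i).range h2, c1⁻¹,
    Subgroup.inv_mem ((ofA i j).comp i).range h1, by group⟩

lemma inv_mem_DCoset_iff {v x : Amalg i j} : x⁻¹ ∈ DCoset i j v ↔ x ∈ DCoset i j v⁻¹ :=
  ⟨fun h => by simpa using inv_mem_DCoset h, fun h => by simpa using inv_mem_DCoset h⟩

lemma mem_DCoset_mul_right {v c x : Amalg i j} (hc : c ∈ ((ofA i j).comp i).range) :
    x * c ∈ DCoset i j v ↔ x ∈ DCoset i j v := by
  rw [← inv_inv v, ← inv_mem_DCoset_iff, mul_inv_rev,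
    mem_DCoset_mul_left (Subgroup.inv_mem _ hc), inv_mem_DCoset_iff]

lemma DCoset_eq_of_mem {v w x : Amalg i j} (hv : x ∈ DCoset i j v) (hw : x ∈ DCoset i j w) :
    DCoset i j v = DCoset i j w := by
  have key : ∀ {v w : Amalg i j}, x ∈ DCoset i j v → x ∈ DCoset i j w →
      DCoset i j v ⊆ DCoset i j w := by
    rintro v w ⟨c1, h1, c2, h2, h⟩ hw _ ⟨d1, k1, d2, k2, rfl⟩
    have hv : v ∈ DCoset i j w := by
      have : v = c1⁻¹ * x * c2⁻¹ := by rw [h]; group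
      rw [this, mem_DCoset_mul_right (Subgroup.inv_mem _ h2),
        mem_DCoset_mul_left (Subgroup.inv_mem _ h1)]
      exact hw
    rw [mem_DCoset_mul_right k2, mem_DCoset_mul_left k1]
    exact hv
  exact (key hv hw).antisymm (key hw hv)

lemma self_mem_DCoset (v : Amalg i j) : v ∈ DCoset i j v :=
  ⟨1, ⟨1, by simp⟩, 1, ⟨1, by simp⟩, by simp⟩

lemma letter_eq_one {v x : Amalg i j} : letter v x = 1 ↔ x ∈ DCoset i j v := by
  unfold letter
  split_ifs <;> simp_all

lemma letter_eq_neg_one {v x : Amalg i j} (hv : DCoset i j v ≠ DCoset i j v⁻¹) :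
    letter v x = -1 ↔ x ∈ DCoset i j v⁻¹ := by
  unfold letter
  split_ifs with h1 h2
  · simp only [false_iff]
    exact fun h2 => hv (DCoset_eq_of_mem h1 h2)
  · simp [h2]
  · simp [h2]

lemma isLetter {v : Amalg i j} (hv : DCoset i j v ≠ DCoset i j v⁻¹) :
    IsLetter ((ofA i j).comp i).range (letter v) where
  mul_left c hc x := by simp only [letter, mem_DCoset_mul_left hc]
  mul_right c hc x := by simp only [letter, mem_DCoset_mul_right hc]
  inv x := by
    by_cases h1 : x ∈ DCoset i j v
    · rw [letter_eq_one.2 h1, (letter_eq_neg_one hv).2 (inv_mem_DCoset h1)]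
    · by_cases h2 : x ∈ DCoset i j v⁻¹
      · rw [(letter_eq_neg_one hv).2 h2, letter_eq_one.2 (inv_mem_DCoset_iff.2 h2), neg_neg]
      · have h1' : x⁻¹ ∉ DCoset i j v⁻¹ := by
          rw [inv_mem_DCoset_iff, inv_inv]; exact h1
        have h2' : x⁻¹ ∉ DCoset i j v := by rw [inv_mem_DCoset_iff]; exact h2
        simp [letter, h1, h2, h1', h2']

/-- A reduced sequence without syllables in `C` is alternating. -/
lemma alt_of_chain (l : List (Amalg i j)) (h1 : ∀ x ∈ l, x ∈ AG i j ∪ BG i j)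
    (h2 : List.IsChain
      (fun x y => ¬(x ∈ AG i j ∧ y ∈ AG i j) ∧ ¬(x ∈ BG i j ∧ y ∈ BG i j)) l)
    (h3 : ∀ x ∈ l, x ∉ CG i j) :
    Alt (ofA i j).range (ofB i j).range ((ofA i j).comp i).range l := by
  refine ⟨fun x hx => ⟨h1 x hx, h3 x hx⟩, ?_⟩
  induction l with
  | nil => simp
  | cons x l ih =>
    simp only [List.mem_cons, forall_eq_or_imp] at h1 h3
    rw [List.isChain_cons] at h2 ⊢
    refine ⟨fun y hy => ?_, ih h1.2 h2.2 h3.2⟩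
    have e := h2.1 y hy
    have ex : x ∈ AG i j ∨ x ∈ BG i j := h1.1
    have ey : y ∈ AG i j ∨ y ∈ BG i j := h1.2 y (List.mem_of_mem_head? hy)
    change x ∈ AG i j ↔ ¬ y ∈ AG i j
    tauto

/-- A group-palindrome has a palindromic pattern, hence parity weight at most three. -/
lemma palindrome_pat (hi : Function.Injective i) (hj : Function.Injective j) {v : Amalg i j}
    (hv : DCoset i j v ≠ DCoset i j v⁻¹) {p : Amalg i j} (hp : GroupPalindrome i j p) :
    ∃ w, HasPat (ofA i j).range (ofB i j).range ((ofA i j).comp i).range (letter v) p w ∧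
      SuppLE (par w) 3 := by
  obtain ⟨l, ⟨h1, h2, h3, -⟩, hl, hr⟩ := hp
  -- The only reduced sequences that fail to be alternating are `[c]` with `c ∈ C`.
  by_cases hC : ∀ x ∈ l, x ∉ CG i j
  · have hA := alt_of_chain l h1 h2 hC
    refine ⟨l.map (letter v), ⟨l, hA, ⟨1, Subgroup.one_mem _, by simp [hl]⟩, rfl⟩, ?_⟩
    apply par_palindrome
    rw [← List.map_reverse]
    exact (isAmalg hi hj).pattern_unique (isLetter hv) l.reverse l 1 1 (Subgroup.one_mem _)
      (Subgroup.one_mem _) (alt_reverse hA) hA (by simp [hl, hr])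
  · push Not at hC
    obtain ⟨x, hx, hxC⟩ := hC
    have hlen : ¬ 1 < l.length := fun h => h3 h x hx hxC
    obtain ⟨y, rfl⟩ : ∃ y, l = [y] := by
      apply List.length_eq_one_iff.1
      have := List.length_pos_of_mem hx
      omega
    obtain rfl : x = y := by simpa using hx
    refine ⟨[], ⟨[], alt_nil, ⟨x, hxC, by simpa using hl.symm⟩, rfl⟩, par_palindrome _ rfl⟩

/-- If the pattern of `g` has parity weight at most `N`, then `Δ(g) ≤ N`. -/
lemma Delta_le (hi : Function.Injective i) (hj : Function.Injective j) {a : A}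
    (hv : DCoset i j (ofA i j a) ≠ DCoset i j (ofA i j a)⁻¹) {g : Amalg i j} {w : List SignType}
    (hw : HasPat (ofA i j).range (ofB i j).range ((ofA i j).comp i).range
      (letter (ofA i j a)) g w) {N : ℕ} (hN : SuppLE (par w) N) : Delta i j a g ≤ N := by
  unfold Delta
  by_cases hex : ∃ l : List (Amalg i j), IsSpecialForm i j a g l
  swap
  · have : spform i j a g = [] := by rw [spform, dif_neg hex]
    simp [this]
  have hsp : IsSpecialForm i j a g (spform i j a g) := by
    rw [spform, dif_pos hex]
    exact Classical.choose_spec hex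
  have hrk : ∀ k, rk i j a k g =
      ((seg (ofA i j a) (2 * k - 1) (spform i j a g) : ℤ)
        - seg (ofA i j a)⁻¹ (2 * k - 1) (spform i j a g)) % 2 := by
    intro k
    simp only [rk, dk, pk, mk, segCount, card_segments]
  generalize spform i j a g = l at hsp hrk
  obtain ⟨⟨h1, h2, h3, h4, h5⟩, u, hu, u', hu', hg⟩ := hsp
  by_cases hlen : 1 < l.length
  swap
  · -- A word with at most one syllable has no segments.
    have hz : ∀ v n, seg v n l = 0 := by
      intro v n
      rcases l with _ | ⟨x, _ | ⟨y, l⟩⟩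
      · rfl
      · simp [seg, FirstAt]
      · simp at hlen
    simp [hrk, hz]
  have hA := alt_of_chain l h1 h2 (h3 hlen)
  obtain ⟨l0, hl0, ⟨c, hc, hgc⟩, rfl⟩ := hw
  have hpat : l.map (letter (ofA i j a)) = l0.map (letter (ofA i j a)) := by
    refine (isAmalg hi hj).pattern_unique (isLetter hv) l l0 u (u' * c⁻¹) hu
      (Subgroup.mul_mem _ hu' (Subgroup.inv_mem _ hc)) hA hl0 ?_
    rw [← mul_assoc, hg, hgc, mul_inv_cancel_right]
  have hplus : ∀ n, seg (ofA i j a) n l = seg 1 n (l0.map (letter (ofA i j a))) := by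
    intro n
    have e := letter_eq_one.2 (self_mem_DCoset (ofA i j a))
    rw [← hpat, ← seg_map (letter (ofA i j a)) (ofA i j a) n l, e]
    intro x hx
    rw [e, letter_eq_one]
    exact ⟨fun h => h ▸ self_mem_DCoset _, h4 x hx⟩
  have hminus : ∀ n, seg (ofA i j a)⁻¹ n l = seg (-1) n (l0.map (letter (ofA i j a))) := by
    intro n
    have e := (letter_eq_neg_one hv).2 (self_mem_DCoset (ofA i j a)⁻¹)
    rw [← hpat, ← seg_map (letter (ofA i j a)) (ofA i j a)⁻¹ n l, e]
    intro x hx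
    rw [e, letter_eq_neg_one hv]
    exact ⟨fun h => h ▸ self_mem_DCoset _, h5 x hx⟩
  obtain ⟨s, hs, hs0⟩ := hN
  have hle : ∀ k ∈ Finset.Icc 1 l.length,
      (rk i j a k g : ℝ) ≤ if 2 * k - 1 ∈ s then 1 else 0 := by
    intro k _
    rw [hrk, hplus, hminus]
    split_ifs with hks
    · have := Int.emod_lt_of_pos ((seg 1 (2 * k - 1) (l0.map (letter (ofA i j a))) : ℤ)
        - seg (-1) (2 * k - 1) (l0.map (letter (ofA i j a)))) (show (0 : ℤ) < 2 by norm_num)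
      have h1 := Int.le_of_lt_add_one (b := 1) this
      exact_mod_cast h1
    · have h0 := hs0 _ hks
      have : ((seg 1 (2 * k - 1) (l0.map (letter (ofA i j a)))
          + seg (-1) (2 * k - 1) (l0.map (letter (ofA i j a))) : ℕ) : ZMod 2) = 0 := by
        push_cast; exact h0
      rw [ZMod.natCast_eq_zero_iff] at this
      have h0' : ((seg 1 (2 * k - 1) (l0.map (letter (ofA i j a))) : ℤ)
        - seg (-1) (2 * k - 1) (l0.map (letter (ofA i j a)))) % 2 = 0 := by omega
      rw [h0']
      simp
  refine (Finset.sum_le_sum hle).trans ?_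
  rw [Finset.sum_boole]
  -- `k ↦ 2k - 1` is injective on `k ≥ 1`, so the indices inject into the support.
  have hcard : ((Finset.Icc 1 l.length).filter fun k => 2 * k - 1 ∈ s).card ≤ s.card := by
    refine Finset.card_le_card_of_injOn (fun k => 2 * k - 1) (fun k hk => ?_) ?_
    · exact (Finset.mem_filter.1 hk).2
    · intro k hk k' hk' h
      have e1 := (Finset.mem_Icc.1 (Finset.mem_filter.1 hk).1).1
      have e2 := (Finset.mem_Icc.1 (Finset.mem_filter.1 hk').1).1
      simp only at h
      omega
  exact_mod_cast hcard.trans hs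

end Concrete

/-- If `g` is a product of `k ≥ 1` group-palindromes in the amalgamated free product, then
`Δ(g) ≤ 12k - 9` (for `Δ` defined with respect to a fixed nontrivial `a ∈ A` with
`C a C ≠ C a⁻¹ C`). -/
theorem amalgam_delta_of_prod_of_group_palindromes
    (hi : Function.Injective i) (hj : Function.Injective j)
    (a : A) (ha : a ≠ 1)
    (hcoset : DCoset i j (ofA i j a) ≠ DCoset i j ((ofA i j a)⁻¹))
    (k : ℕ) (hk : 1 ≤ k) (ps : List (Amalg i j)) (hlen : ps.length = k)
    (hps : ∀ p ∈ ps, GroupPalindrome i j p) :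
    Delta i j a ps.prod ≤ 12 * (k : ℝ) - 9 := by
  obtain ⟨p, qs, rfl⟩ : ∃ p qs, ps = p :: qs :=
    List.exists_cons_of_length_pos (by omega)
  obtain ⟨w, hw, hN⟩ := hasPat_prod (isAmalg hi hj) (isLetter hcoset) qs p
    fun q hq => palindrome_pat hi hj hcoset (hps q hq)
  refine (Delta_le hi hj hcoset hw hN).trans (le_of_eq ?_)
  subst hlen
  push_cast [List.length_cons]
  ring

end PalAmalg
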